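/- Let n ≥ 4, let T be a triangulation of the n-gon, let e = {A,C} be a type-1 diagonal of T with Q_T(e) = ABCD, and let T' be the triangulation obtained from T by flipping e. Then the only diagonals whose quadrilateral type changes under the flip are {A,C} (replaced by {B,D}) and, if it is a diagonal, {B,C}. Precisely: {A,C} is type-1 in T and {B,D} is type-2 in T'; if {B,C} is a diagonal, then {B,C} is type-2 in T and type-1 in T'; and every diagonal f of T with f ∉ {{A,C},{B,C}} is also a diagonal of T' and has the same type (1 or 2) in T' as in T. -/

import Mathlib

/-!
Orient every chord `{p, q}` as `p < q` and record `T` as a relation `E` on labels. A chord has up to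
three kinds of apexes: an inner one (`p < r < q`), a right one (`s > q`) and a left one (`s < p`). A
diagonal of `T` is type-1 iff it has an inner and a right apex, and type-2 iff it has an inner and a
left apex (`isType1_pair`, `isType2_pair`).

The flip replaces the triangles `ABC`, `ACD` by `ABD`, `BCD`. On the sides of `ABCD` this trades an
inner apex for an inner apex (on `AD`), a right apex for a right apex (on `AB`), a left apex for a left
apex (on `CD`), but on `BC` it trades the left apex `A` for the right apex `D`. That no other triangle
is affected follows from non-crossing alone, which forces every triangle of `T` on `AC`, and every
triangle of the flipped set on `BD`, to be one of the four above (`inner_flip`, `right_flip`,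
`left_flip`). Maximality of `T` enters only to show that the diagonal `BC` has an inner apex
(`exists_inner`).
-/

/-- `e` is a chord of the convex `n`-gon: a 2-element subset of `{0, …, n-1}`. -/
def IsChord (n : ℕ) (e : Finset ℕ) : Prop :=
  e.card = 2 ∧ ∀ x ∈ e, x < n

/-- `e` is a boundary edge of the `n`-gon, i.e. of the form `{i, (i+1) mod n}`. -/
def IsBoundaryEdge (n : ℕ) (e : Finset ℕ) : Prop :=
  ∃ i < n, e = ({i, (i + 1) % n} : Finset ℕ)

/-- `e` is a diagonal of the `n`-gon: a chord that is not a boundary edge. -/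
def IsDiagonal (n : ℕ) (e : Finset ℕ) : Prop :=
  IsChord n e ∧ ¬ IsBoundaryEdge n e

/-- Two chords `{a,b}` (`a<b`) and `{c,d}` (`c<d`) cross if `a<c<b<d` or `c<a<d<b`. -/
def Crosses (e f : Finset ℕ) : Prop :=
  ∃ a b c d : ℕ, a < b ∧ c < d ∧ e = ({a, b} : Finset ℕ) ∧ f = ({c, d} : Finset ℕ) ∧
    ((a < c ∧ c < b ∧ b < d) ∨ (c < a ∧ a < d ∧ d < b))

/-- `T` is a triangulation of the `n`-gon: the set of all `n` boundary edges together
with a maximal set of pairwise non-crossing diagonals. -/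
def IsTriangulation (n : ℕ) (T : Finset (Finset ℕ)) : Prop :=
  (∀ e ∈ T, IsChord n e) ∧
  (∀ i < n, ({i, (i + 1) % n} : Finset ℕ) ∈ T) ∧
  (∀ e ∈ T, ∀ f ∈ T, ¬ Crosses e f) ∧
  (∀ e, IsDiagonal n e → e ∉ T → ∃ f ∈ T, Crosses e f)

/-- The diagonal `e` is type-1 in `T`: its quadrilateral `Q_T(e) = abcd` (with
`a < b < c < d`) has `e = {a, c}`. -/
def IsType1 (T : Finset (Finset ℕ)) (e : Finset ℕ) : Prop :=
  ∃ a b c d : ℕ, a < b ∧ b < c ∧ c < d ∧ e = ({a, c} : Finset ℕ) ∧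
    ({a, b} : Finset ℕ) ∈ T ∧ ({b, c} : Finset ℕ) ∈ T ∧ ({c, d} : Finset ℕ) ∈ T ∧
    ({a, d} : Finset ℕ) ∈ T ∧ ({a, c} : Finset ℕ) ∈ T

/-- The diagonal `e` is type-2 in `T`: its quadrilateral `Q_T(e) = abcd` (with
`a < b < c < d`) has `e = {b, d}`. -/
def IsType2 (T : Finset (Finset ℕ)) (e : Finset ℕ) : Prop :=
  ∃ a b c d : ℕ, a < b ∧ b < c ∧ c < d ∧ e = ({b, d} : Finset ℕ) ∧
    ({a, b} : Finset ℕ) ∈ T ∧ ({b, c} : Finset ℕ) ∈ T ∧ ({c, d} : Finset ℕ) ∈ T ∧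
    ({a, d} : Finset ℕ) ∈ T ∧ ({b, d} : Finset ℕ) ∈ T

/-! ### Apexes of a chord -/

/-- The chord `p < q` has a triangle in `E` whose third vertex lies strictly between `p` and `q`. -/
def InnerApex (E : ℕ → ℕ → Prop) (p q : ℕ) : Prop := ∃ r, p < r ∧ r < q ∧ E p r ∧ E r q

/-- The chord `p < q` has a triangle in `E` whose third vertex exceeds `q`. -/
def RightApex (E : ℕ → ℕ → Prop) (p q : ℕ) : Prop := ∃ s, q < s ∧ E q s ∧ E p s

/-- The chord `p < q` has a triangle in `E` whose third vertex is below `p`. -/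
def LeftApex (E : ℕ → ℕ → Prop) (p q : ℕ) : Prop := ∃ s, s < p ∧ E s p ∧ E s q

/-- Chords of `T` as a relation; it is only ever used with the smaller label first. -/
def Edge (T : Finset (Finset ℕ)) (p q : ℕ) : Prop := ({p, q} : Finset ℕ) ∈ T

/-- Non-crossing for a relation whose chords are written with the smaller label first. -/
def NonCrossing (E : ℕ → ℕ → Prop) : Prop :=
  ∀ a b c d, a < c → c < b → b < d → E a b → E c d → False

/-- The chords after flipping `AC` to `BD`, as a relation. -/
def FlipRel (E : ℕ → ℕ → Prop) (A B C D p q : ℕ) : Prop :=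
  (p = B ∧ q = D) ∨ (¬ (p = A ∧ q = C) ∧ E p q)

theorem pair_eq_iff {a b c d : ℕ} (h : a < b) (h' : c < d) :
    ({a, b} : Finset ℕ) = {c, d} ↔ a = c ∧ b = d := by
  constructor
  · intro e
    have h1 : a ∈ ({c, d} : Finset ℕ) := e ▸ by simp
    have h2 : b ∈ ({c, d} : Finset ℕ) := e ▸ by simp
    have h3 : c ∈ ({a, b} : Finset ℕ) := e ▸ by simp
    simp only [Finset.mem_insert, Finset.mem_singleton] at h1 h2 h3
    omega
  · rintro ⟨rfl, rfl⟩
    rfl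

theorem isType1_pair {T : Finset (Finset ℕ)} {p q : ℕ} (h : p < q) :
    IsType1 T {p, q} ↔ Edge T p q ∧ InnerApex (Edge T) p q ∧ RightApex (Edge T) p q := by
  constructor
  · rintro ⟨a, b, c, d, h1, h2, h3, e, k1, k2, k3, k4, k5⟩
    obtain ⟨rfl, rfl⟩ := (pair_eq_iff h (h1.trans h2)).1 e
    exact ⟨k5, ⟨b, h1, h2, k1, k2⟩, ⟨d, h3, k3, k4⟩⟩
  · rintro ⟨k5, ⟨b, h1, h2, k1, k2⟩, ⟨d, h3, k3, k4⟩⟩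
    exact ⟨p, b, q, d, h1, h2, h3, rfl, k1, k2, k3, k4, k5⟩

theorem isType2_pair {T : Finset (Finset ℕ)} {p q : ℕ} (h : p < q) :
    IsType2 T {p, q} ↔ Edge T p q ∧ InnerApex (Edge T) p q ∧ LeftApex (Edge T) p q := by
  constructor
  · rintro ⟨a, b, c, d, h1, h2, h3, e, k1, k2, k3, k4, k5⟩
    obtain ⟨rfl, rfl⟩ := (pair_eq_iff h (h2.trans h3)).1 e
    exact ⟨k5, ⟨c, h2, h3, k2, k3⟩, ⟨a, h1, k1, k4⟩⟩
  · rintro ⟨k5, ⟨c, h2, h3, k2, k3⟩, ⟨a, h1, k1, k4⟩⟩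
    exact ⟨a, p, c, q, h1, h2, h3, rfl, k1, k2, k3, k4, k5⟩

theorem edge_flip {T : Finset (Finset ℕ)} {A B C D p q : ℕ} (hAC : A < C) (hBD : B < D)
    (h : p < q) :
    Edge (insert {B, D} (T.erase {A, C})) p q ↔ FlipRel (Edge T) A B C D p q := by
  simp only [Edge, FlipRel, Finset.mem_insert, Finset.mem_erase, ne_eq, pair_eq_iff h hBD,
    pair_eq_iff h hAC]

theorem inner_congr {E F : ℕ → ℕ → Prop} (hEF : ∀ p q, p < q → (E p q ↔ F p q)) {p q : ℕ} :
    InnerApex E p q ↔ InnerApex F p q := by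
  unfold InnerApex; grind

theorem right_congr {E F : ℕ → ℕ → Prop} (hEF : ∀ p q, p < q → (E p q ↔ F p q)) {p q : ℕ}
    (h : p < q) : RightApex E p q ↔ RightApex F p q := by
  unfold RightApex; grind

theorem left_congr {E F : ℕ → ℕ → Prop} (hEF : ∀ p q, p < q → (E p q ↔ F p q)) {p q : ℕ}
    (h : p < q) : LeftApex E p q ↔ LeftApex F p q := by
  unfold LeftApex; grind

theorem nonCrossing_edge {n : ℕ} {T : Finset (Finset ℕ)} (hT : IsTriangulation n T) :
    NonCrossing (Edge T) := fun a b c d h1 h2 h3 k1 k2 =>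
  hT.2.2.1 _ k1 _ k2 ⟨a, b, c, d, h1.trans h2, h2.trans h3, rfl, rfl, Or.inl ⟨h1, h2, h3⟩⟩

/-! ### Existence of an inner apex -/

/-- The inner apex of `p < q` is the largest neighbour `r < q` of `p`: a chord of `T` crossing `{r, q}`
would cross `{p, q}` or `{p, r}`, or else be a chord from `p` to a label in `(r, q)`. -/
theorem exists_inner {n : ℕ} {T : Finset (Finset ℕ)} (hT : IsTriangulation n T) {p q : ℕ}
    (hpq : p + 1 < q) (hq : q < n) (h : Edge T p q) : InnerApex (Edge T) p q := by
  classical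
  have hX := nonCrossing_edge hT
  have side : ∀ i, i + 1 < n → Edge T i (i + 1) := fun i hi => by
    simpa only [Edge, Nat.mod_eq_of_lt hi] using hT.2.1 i (by omega)
  let S := (Finset.Ioo p q).filter (fun r => Edge T p r)
  have hS : S.Nonempty := ⟨p + 1, by simp [S, hpq, side p (by omega)]⟩
  obtain ⟨r, hrS, hmax⟩ := S.exists_max_image id hS
  simp only [S, Finset.mem_filter, Finset.mem_Ioo, id] at hrS hmax
  obtain ⟨⟨hpr, hrq⟩, hEr⟩ := hrS
  refine ⟨r, hpr, hrq, hEr, ?_⟩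
  by_contra hn
  have hdiag : IsDiagonal n {r, q} := by
    refine ⟨⟨Finset.card_pair (by omega), ?_⟩, ?_⟩
    · simp only [Finset.mem_insert, Finset.mem_singleton]
      omega
    · rintro ⟨i, hi, he⟩
      by_cases hlast : i + 1 < n
      · rw [Nat.mod_eq_of_lt hlast, pair_eq_iff hrq (by omega)] at he
        obtain ⟨rfl, rfl⟩ := he
        exact hn (side _ hq)
      · -- The side joining `n - 1` to `0` is excluded since `0 ≤ p < r`.
        have : i + 1 = n := by omega
        rw [this, Nat.mod_self, Finset.pair_comm i 0, pair_eq_iff hrq (by omega)] at he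
        omega
  obtain ⟨f, hf, a, b, c, d, hab, hcd, e1, rfl, hc⟩ := hT.2.2.2 _ hdiag hn
  obtain ⟨rfl, rfl⟩ := (pair_eq_iff hrq hab).1 e1
  rcases hc with ⟨h1, h2, h3⟩ | ⟨h1, h2, h3⟩
  · exact hX p q c d (by omega) h2 h3 h hf
  · rcases lt_trichotomy c p with hcp | rfl | hcp
    · exact hX c d p q hcp (by omega) h3 hf h
    · have := hmax d ⟨⟨hcd, h3⟩, hf⟩
      omega
    · exact hX p r c d hcp h1 h2 hEr hf

/-! ### Effect of the flip on apexes -/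

section Flip

variable {E : ℕ → ℕ → Prop} {A B C D p q : ℕ}

/-- The only inner apex that changes is the one of `AD`, from `C` to `B`. -/
theorem inner_flip (hX : NonCrossing E) (hAB : A < B) (hBC : B < C) (hCD : C < D)
    (eAB : E A B) (eBC : E B C) (eCD : E C D) (eAD : E A D) (eAC : E A C)
    (hpq : p < q) (h : E p q) :
    InnerApex (FlipRel E A B C D) p q ↔ InnerApex E p q := by
  constructor
  · rintro ⟨r, h1, h2, ⟨rfl, rfl⟩ | ⟨-, k1⟩, k2⟩
    · obtain ⟨rfl, -⟩ | ⟨-, k2⟩ := k2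
      · omega
      · exact (hX A r p q (by omega) (by omega) h2 eAD h).elim
    · obtain ⟨rfl, rfl⟩ | ⟨-, k2⟩ := k2
      · obtain rfl : p = A := by
          rcases lt_trichotomy p A with hp | hp | hp
          · exact (hX p r A C hp (by omega) hBC k1 eAC).elim
          · exact hp
          · exact (hX A C p q hp (by omega) hCD eAC h).elim
        exact ⟨C, by omega, hCD, eAC, eCD⟩
      · exact ⟨r, h1, h2, k1, k2⟩
  · rintro ⟨r, h1, h2, k1, k2⟩
    by_cases c1 : p = A ∧ r = C
    · obtain ⟨rfl, rfl⟩ := c1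
      obtain rfl : q = D := by
        rcases lt_trichotomy q D with hq | hq | hq
        · exact (hX p q r D h1 h2 hq h eCD).elim
        · exact hq
        · exact (hX p D r q h1 hCD hq eAD k2).elim
      exact ⟨B, hAB, by omega, Or.inr ⟨by omega, eAB⟩, Or.inl ⟨rfl, rfl⟩⟩
    · by_cases c2 : r = A ∧ q = C
      · obtain ⟨rfl, rfl⟩ := c2
        exact (hX p q r D h1 h2 hCD h eAD).elim
      · exact ⟨r, h1, h2, Or.inr ⟨c1, k1⟩, Or.inr ⟨c2, k2⟩⟩

/-- `AB` exchanges its right apex `C` for `D`. Only `BC` is excluded: it gains the right apex `D`. -/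
theorem right_flip (hX : NonCrossing E) (hAB : A < B) (hBC : B < C) (hCD : C < D)
    (eAB : E A B) (eBC : E B C) (eCD : E C D) (eAD : E A D) (eAC : E A C)
    (hpq : p < q) (h : E p q) (hne : ¬ (p = B ∧ q = C)) :
    RightApex (FlipRel E A B C D) p q ↔ RightApex E p q := by
  constructor
  · rintro ⟨s, h1, ⟨rfl, rfl⟩ | ⟨-, k1⟩, k2⟩
    · obtain ⟨rfl, -⟩ | ⟨-, k2⟩ := k2
      · omega
      · obtain rfl : p = A := by
          rcases lt_trichotomy p A with hp | hp | hp
          · exact (hX p q A C hp hAB hBC h eAC).elim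
          · exact hp
          · exact (hX A C p s hp (by omega) hCD eAC k2).elim
        exact ⟨C, hBC, eBC, eAC⟩
    · obtain ⟨rfl, rfl⟩ | ⟨-, k2⟩ := k2
      · rcases lt_trichotomy q C with hq | hq | hq
        · exact (hX p C q s hpq hq hCD eBC k1).elim
        · exact (hne ⟨rfl, hq⟩).elim
        · exact (hX p q C s hBC hq h1 h eCD).elim
      · exact ⟨s, h1, k1, k2⟩
  · rintro ⟨s, h1, k1, k2⟩
    by_cases c1 : q = A ∧ s = C
    · obtain ⟨rfl, rfl⟩ := c1
      exact (hX p s q D hpq h1 hCD k2 eAD).elim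
    · by_cases c2 : p = A ∧ s = C
      · obtain ⟨rfl, rfl⟩ := c2
        obtain rfl : q = B := by
          rcases lt_trichotomy q B with hq | hq | hq
          · exact (hX p B q s hpq hq hBC eAB k1).elim
          · exact hq
          · exact (hX p q B s hAB hq h1 h eBC).elim
        exact ⟨D, by omega, Or.inl ⟨rfl, rfl⟩, Or.inr ⟨by omega, eAD⟩⟩
      · exact ⟨s, h1, Or.inr ⟨c1, k1⟩, Or.inr ⟨c2, k2⟩⟩

/-- `CD` exchanges its left apex `A` for `B`. Only `BC` is excluded: it loses the left apex `A`. -/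
theorem left_flip (hX : NonCrossing E) (hAB : A < B) (hBC : B < C) (hCD : C < D)
    (eAB : E A B) (eBC : E B C) (eCD : E C D) (eAD : E A D) (eAC : E A C)
    (hpq : p < q) (h : E p q) (hne : ¬ (p = B ∧ q = C)) :
    LeftApex (FlipRel E A B C D) p q ↔ LeftApex E p q := by
  constructor
  · rintro ⟨s, h1, ⟨rfl, rfl⟩ | ⟨-, k1⟩, k2⟩
    · obtain ⟨-, rfl⟩ | ⟨-, k2⟩ := k2
      · omega
      · exact (hX A p s q hAB h1 hpq eAD k2).elim
    · obtain ⟨rfl, rfl⟩ | ⟨-, k2⟩ := k2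
      · obtain rfl : p = C := by
          rcases lt_trichotomy p C with hp | hp | hp
          · exact (hX s C p q h1 hp hCD eBC h).elim
          · exact hp
          · exact (hX s p C q hBC hp hpq k1 eCD).elim
        exact ⟨A, by omega, eAC, eAD⟩
      · exact ⟨s, h1, k1, k2⟩
  · rintro ⟨s, h1, k1, k2⟩
    by_cases c1 : s = A ∧ p = C
    · obtain ⟨rfl, rfl⟩ := c1
      obtain rfl : q = D := by
        rcases lt_trichotomy q D with hq | hq | hq
        · exact (hX s q p D h1 hpq hq k2 eCD).elim
        · exact hq
        · exact (hX s D p q h1 hCD hq eAD h).elim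
      exact ⟨B, hBC, Or.inr ⟨by omega, eBC⟩, Or.inl ⟨rfl, rfl⟩⟩
    · by_cases c2 : s = A ∧ q = C
      · obtain ⟨rfl, rfl⟩ := c2
        rcases lt_trichotomy p B with hp | hp | hp
        · exact (hX s B p q h1 hp hBC eAB h).elim
        · exact (hne ⟨hp, rfl⟩).elim
        · exact (hX s p B q hAB hp hpq k1 eBC).elim
      · exact ⟨s, h1, Or.inr ⟨c1, k1⟩, Or.inr ⟨c2, k2⟩⟩

end Flip

/-- When flipping the type-1 diagonal `{A, C}` with quadrilateral `ABCD` (forming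
`T' = T - {A,C} + {B,D}`), the only diagonals whose quadrilateral type changes are
`{A, C}` (replaced by `{B, D}`) and, if it is a diagonal, `{B, C}`: `{A, C}` is type-1
in `T` and `{B, D}` is type-2 in `T'`; if `{B, C}` is a diagonal then it is type-2 in
`T` and type-1 in `T'`; and every other diagonal of `T` is a diagonal of `T'` of the
same type. -/
theorem flip_type_changes
    (n : ℕ) (hn : 4 ≤ n)
    (T : Finset (Finset ℕ)) (hT : IsTriangulation n T)
    (A B C D : ℕ) (hAB : A < B) (hBC : B < C) (hCD : C < D) (hD : D < n)
    (hABm : ({A, B} : Finset ℕ) ∈ T) (hBCm : ({B, C} : Finset ℕ) ∈ T)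
    (hCDm : ({C, D} : Finset ℕ) ∈ T) (hADm : ({A, D} : Finset ℕ) ∈ T)
    (hACm : ({A, C} : Finset ℕ) ∈ T) :
    IsType1 T ({A, C} : Finset ℕ) ∧
    IsType2 (insert ({B, D} : Finset ℕ) (T.erase ({A, C} : Finset ℕ)))
      ({B, D} : Finset ℕ) ∧
    (IsDiagonal n ({B, C} : Finset ℕ) →
      IsType2 T ({B, C} : Finset ℕ) ∧
      IsType1 (insert ({B, D} : Finset ℕ) (T.erase ({A, C} : Finset ℕ)))
        ({B, C} : Finset ℕ)) ∧
    (∀ f ∈ T, IsDiagonal n f → f ≠ ({A, C} : Finset ℕ) → f ≠ ({B, C} : Finset ℕ) →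
      f ∈ insert ({B, D} : Finset ℕ) (T.erase ({A, C} : Finset ℕ)) ∧
      (IsType1 T f ↔
        IsType1 (insert ({B, D} : Finset ℕ) (T.erase ({A, C} : Finset ℕ))) f) ∧
      (IsType2 T f ↔
        IsType2 (insert ({B, D} : Finset ℕ) (T.erase ({A, C} : Finset ℕ))) f)) := by
  have hX := nonCrossing_edge hT
  have hAC : A < C := hAB.trans hBC
  have hBD : B < D := hBC.trans hCD
  have hF := fun p q (h : p < q) => edge_flip (T := T) hAC hBD h
  set T' := insert ({B, D} : Finset ℕ) (T.erase ({A, C} : Finset ℕ)) with hT'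
  have eBD : Edge T' B D := (hF B D hBD).2 (Or.inl ⟨rfl, rfl⟩)
  have keep : ∀ p q, p < q → ¬ (p = A ∧ q = C) → Edge T p q → Edge T' p q :=
    fun p q h hne k => (hF p q h).2 (Or.inr ⟨hne, k⟩)
  have eAB := keep A B hAB (by omega) hABm
  have eBC := keep B C hBC (by omega) hBCm
  have eCD := keep C D hCD (by omega) hCDm
  have eAD := keep A D (by omega) (by omega) hADm
  refine ⟨⟨A, B, C, D, hAB, hBC, hCD, rfl, hABm, hBCm, hCDm, hADm, hACm⟩,
    ⟨A, B, C, D, hAB, hBC, hCD, rfl, eAB, eBC, eCD, eAD, eBD⟩, ?_, ?_⟩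
  · intro hdiag
    have hlt : B + 1 < C := by
      by_contra hcon
      have hC : C = B + 1 := by omega
      exact hdiag.2 ⟨B, by omega, by rw [Nat.mod_eq_of_lt (by omega), hC]⟩
    obtain ⟨r, h1, h2, k1, k2⟩ := exists_inner hT hlt (by omega) hBCm
    refine ⟨(isType2_pair hBC).2 ⟨hBCm, ⟨r, h1, h2, k1, k2⟩, A, hAB, hABm, hACm⟩,
      (isType1_pair hBC).2 ⟨eBC, ⟨r, h1, h2, ?_, ?_⟩, D, hCD, eCD, eBD⟩⟩
    · exact keep B r h1 (by omega) k1
    · exact keep r C h2 (by omega) k2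
  · intro f hf _ hneAC hneBC
    obtain ⟨p, q, hpq, rfl⟩ : ∃ p q, p < q ∧ f = {p, q} := by
      obtain ⟨x, y, hxy, rfl⟩ := Finset.card_eq_two.1 (hT.1 f hf).1
      rcases lt_or_gt_of_ne hxy with h | h
      · exact ⟨x, y, h, rfl⟩
      · exact ⟨y, x, h, Finset.pair_comm x y⟩
    rw [ne_eq, pair_eq_iff hpq hAC] at hneAC
    rw [ne_eq, pair_eq_iff hpq hBC] at hneBC
    have hfe : Edge T p q := hf
    have hf' : Edge T' p q := keep p q hpq hneAC hf
    refine ⟨hf', ?_, ?_⟩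
    · rw [isType1_pair hpq, isType1_pair hpq, inner_congr hF, right_congr hF hpq,
        inner_flip hX hAB hBC hCD hABm hBCm hCDm hADm hACm hpq hf,
        right_flip hX hAB hBC hCD hABm hBCm hCDm hADm hACm hpq hf hneBC]
      simp only [hfe, hf']
    · rw [isType2_pair hpq, isType2_pair hpq, inner_congr hF, left_congr hF hpq,
        inner_flip hX hAB hBC hCD hABm hBCm hCDm hADm hACm hpq hf,
        left_flip hX hAB hBC hCD hABm hBCm hCDm hADm hACm hpq hf hneBC]
      simp only [hfe, hf']
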